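/- arXiv:math/9307231 — 2 statements merged into one kernel-verified Lean document; each statement's English description precedes it below -/
import Mathlib

section
/- Let n ≥ 2 and let V ⊂ P^n over C be a smooth hypersurface defined by a homogeneous form F of degree d ≥ 3. Then the subgroup Φ of PGL_{n+1}(C) stabilizing V is finite. -/
open MvPolynomial Matrix

/-!
If `F ∘ g = F`, then differentiating gives `∇F(g v) = ∇F(v) g⁻¹`.  Taking `v` to be a basis vector,
`∇F` at a column of `g` is a `K`-linear combination of entries of `g⁻¹`, and vice versa.  Let `|·|`
be a valuation that is at most `1` on `K`.  Since the `∂ᵢF` have no common zero but the origin,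
`max |wᵢ| ^ (d - 1) ≤ max |∂ᵢF(w)|`, so the largest valuation `α` of an entry of `g` or `g⁻¹`
satisfies `α ^ (d - 1) ≤ α`; as `d - 1 ≥ 2`, this forces `α ≤ 1`.  The matrix entries, as functions
on the group fixing `F`, are therefore integral over `K`, and each takes only finitely many values.

Smoothness makes `F` squarefree, so by the Nullstellensatz a matrix preserving the zero locus
multiplies `F` by a constant, which a scalar matrix absorbs.
-/

universe u

section Integrality

variable {R : Type*} {S : Type u} [CommRing R] [CommRing S] [Algebra R S]

theorem isIntegral_of_forall_isPrime_isIntegral_mk {a : S}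
    (h : ∀ P : Ideal S, P.IsPrime → IsIntegral R (Ideal.Quotient.mk P a)) : IsIntegral R a := by
  -- If `a` is not integral, its values under monic polynomials avoid `0`, hence some prime.
  let monicValues : Submonoid S :=
    { carrier := {b | ∃ p : Polynomial R, p.Monic ∧ Polynomial.aeval a p = b}
      one_mem' := ⟨1, Polynomial.monic_one, map_one _⟩
      mul_mem' := by
        rintro _ _ ⟨p, hp, rfl⟩ ⟨q, hq, rfl⟩
        exact ⟨p * q, hp.mul hq, map_mul _ p q⟩ }
  by_contra ha
  have hdisj : Disjoint ((⊥ : Ideal S) : Set S) monicValues := by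
    rw [Set.disjoint_left]
    rintro _ rfl ⟨p, hp, hpa⟩
    exact ha ⟨p, hp, hpa⟩
  obtain ⟨P, hP, -, hPdisj⟩ := Ideal.exists_le_prime_disjoint ⊥ monicValues hdisj
  obtain ⟨p, hp, hpa⟩ := h P hP
  have hmem : Polynomial.aeval a p ∈ P := by
    rw [← Ideal.Quotient.eq_zero_iff_mem, ← hpa, ← Ideal.Quotient.mkₐ_eq_mk R,
      ← Polynomial.aeval_algHom_apply, Polynomial.aeval_def]
  exact Set.disjoint_left.mp hPdisj hmem ⟨p, hp, rfl⟩

theorem isIntegral_of_forall_mem_valuationSubring {L : Type*} [Field L] [Algebra R L] {a : L}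
    (h : ∀ (V : ValuationSubring L) [Algebra R V] [IsScalarTower R V L], a ∈ V) :
    IsIntegral R a := by
  have : IsIntegrallyClosedIn (integralClosure R L).toSubring L :=
    inferInstanceAs (IsIntegrallyClosedIn (integralClosure R L) L)
  by_contra ha
  obtain ⟨V, hV, haV⟩ := (integralClosure R L).toSubring
    |>.exists_le_valuationSubring_of_isIntegrallyClosedIn (x := a) ha
  let f : R →+* V := (algebraMap R L).codRestrict V.toSubring
    fun r => hV (algebraMap_mem (integralClosure R L) r)
  let : Algebra R V := f.toAlgebra
  have : IsScalarTower R V L := IsScalarTower.of_algebraMap_eq fun _ => rfl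
  exact haV (h V)

theorem isIntegral_of_forall_algHom_mem_valuationSubring {a : S}
    (h : ∀ (L : Type u) [Field L] [Algebra R L] (φ : S →ₐ[R] L) (V : ValuationSubring L)
      [Algebra R V] [IsScalarTower R V L], φ a ∈ V) :
    IsIntegral R a := by
  refine isIntegral_of_forall_isPrime_isIntegral_mk fun P _ => ?_
  let φ : S ⧸ P →ₐ[R] FractionRing (S ⧸ P) := IsScalarTower.toAlgHom R _ _
  have hφ : Function.Injective φ := FaithfulSMul.algebraMap_injective _ _
  rw [← isIntegral_algHom_iff φ hφ]
  exact isIntegral_of_forall_mem_valuationSubring fun V =>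
    h (FractionRing (S ⧸ P)) (φ.comp (Ideal.Quotient.mkₐ R P)) V

theorem finite_range_of_isIntegral {T D : Type*} [CommRing D] [IsDomain D] {a : T → D}
    (ha : IsIntegral D a) : (Set.range a).Finite := by
  obtain ⟨p, hp, hpa⟩ := ha
  refine (Polynomial.finite_setOfPred_isRoot hp.ne_zero).subset ?_
  rintro _ ⟨t, rfl⟩
  have hroot := congrArg (Pi.evalRingHom (fun _ : T => D) t) hpa
  rw [Polynomial.hom_eval₂] at hroot
  exact hroot

end Integrality

section LinearSubstitution

variable {R σ τ : Type*} [CommSemiring R] [Fintype σ]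

theorem pderiv_bind₁ (f : σ → MvPolynomial τ R) (p : MvPolynomial σ R) (j : τ) :
    pderiv j (bind₁ f p) = ∑ i, bind₁ f (pderiv i p) * pderiv j (f i) := by
  classical
  induction p using MvPolynomial.induction_on with
  | C a => simp
  | add p q hp hq => simp only [map_add, hp, hq, add_mul, Finset.sum_add_distrib]
  | mul_X p n hp =>
    have hX (i : σ) : pderiv i (X n : MvPolynomial σ R) = if i = n then 1 else 0 := by
      rw [pderiv_X, Pi.single_apply]
      simp only [eq_comm]
    simp only [map_mul, bind₁_X_right, Derivation.leibniz, smul_eq_mul, map_add, hp, hX, add_mul,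
      Finset.sum_add_distrib, apply_ite (bind₁ f), map_zero, mul_ite, mul_one, mul_zero,
      ite_mul, zero_mul, Finset.sum_ite_eq', Finset.mem_univ, if_true, Finset.mul_sum, mul_assoc]

/-- The polynomial `p(A x)` obtained from `p(x)` by the linear substitution with matrix `A`. -/
noncomputable def linearSubst (A : Matrix σ σ R) (p : MvPolynomial σ R) : MvPolynomial σ R :=
  bind₁ A.toMvPolynomial p

theorem eval_linearSubst (A : Matrix σ σ R) (p : MvPolynomial σ R) (v : σ → R) :
    eval v (linearSubst A p) = eval (A *ᵥ v) p := by
  have h := aeval_bind₁ (R := R) v A.toMvPolynomial p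
  simp only [aeval_eq_eval] at h
  refine h.trans ?_
  congr 2
  exact funext fun i => toMvPolynomial_eval_eq_apply A i v

theorem isHomogeneous_linearSubst {p : MvPolynomial σ R} {d : ℕ} (hp : p.IsHomogeneous d)
    (A : Matrix σ σ R) : (linearSubst A p).IsHomogeneous d := by
  have h := hp.aeval A.toMvPolynomial A.toMvPolynomial_isHomogeneous
  rwa [one_mul] at h

theorem pderiv_linearSubst (A : Matrix σ σ R) (p : MvPolynomial σ R) (j : σ) :
    pderiv j (linearSubst A p) = ∑ i, linearSubst A (pderiv i p) * C (A i j) := by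
  classical
  have hA (i : σ) : pderiv j (A.toMvPolynomial i) = C (A i j) := by
    simp [Matrix.toMvPolynomial, ← C_mul_X_eq_monomial, pderiv_X, Pi.single_apply]
  simp only [linearSubst, pderiv_bind₁, hA]

end LinearSubstitution

section Polynomials

variable {R S σ τ : Type*} [CommSemiring R]

theorem aeval_pi_apply (x : σ → τ → R) (p : MvPolynomial σ R) (t : τ) :
    aeval x p t = eval (fun i => x i t) p := by
  have h := comp_aeval_apply x (Pi.evalAlgHom R (fun _ : τ => R) t) p
  rwa [aeval_eq_eval] at h

theorem aeval_smul_of_isHomogeneous [CommSemiring S] [Algebra R S]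
    {F : MvPolynomial σ R} {d : ℕ} (hF : F.IsHomogeneous d) (c : S) (v : σ → S) :
    aeval (c • v) F = c ^ d * aeval v F := by
  rw [aeval_def, eval₂_eq, aeval_def, eval₂_eq, Finset.mul_sum]
  refine Finset.sum_congr rfl fun m hm => ?_
  have hdeg : ∑ i ∈ m.support, m i = d := (hF.degree_eq_sum_deg_support hm).symm
  simp only [Pi.smul_apply, smul_eq_mul, mul_pow, Finset.prod_mul_distrib,
    Finset.prod_pow_eq_pow_sum, hdeg]
  ring

/-- The polynomials `G j` have no common zero except possibly the origin.  A form is smooth when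
this holds for its partial derivatives. -/
def OnlyTrivialZero (G : τ → MvPolynomial σ R) : Prop :=
  ∀ v : σ → R, (∀ j, eval v (G j) = 0) → v = 0

end Polynomials

section Forms

variable {K σ τ : Type*} [Field K] [IsAlgClosed K]

theorem OnlyTrivialZero.X_mem_of_isPrime [Finite σ] {G : τ → MvPolynomial σ K}
    (hG : OnlyTrivialZero G) {P : Ideal (MvPolynomial σ K)} [P.IsPrime] (hP : ∀ j, G j ∈ P)
    (i : σ) : X i ∈ P := by
  rw [← MvPolynomial.IsPrime.vanishingIdeal_zeroLocus (K := K) P]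
  intro v hv
  have hv0 : v = 0 := hG v fun j => by simpa only [aeval_eq_eval] using hv (G j) (hP j)
  rw [aeval_X, hv0, Pi.zero_apply]

theorem OnlyTrivialZero.exists_isUnit_aeval [Finite σ] {G : τ → MvPolynomial σ K}
    (hG : OnlyTrivialZero G) {O : Type*} [CommRing O] [IsLocalRing O] [Algebra K O] {w : σ → O}
    {i : σ} (hi : IsUnit (w i)) : ∃ j, IsUnit (aeval w (G j)) := by
  by_contra! hnonunit
  let P := (IsLocalRing.maximalIdeal O).comap (aeval w : MvPolynomial σ K →ₐ[K] O)
  have hXP : X i ∈ P := hG.X_mem_of_isPrime (fun j => hnonunit j) i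
  have hwi : w i ∈ IsLocalRing.maximalIdeal O := by
    simpa only [P, Ideal.mem_comap, aeval_X] using hXP
  exact hwi hi

theorem exists_ne_zero_eval_eq_zero_of_irreducible [Finite σ] [Nontrivial σ]
    {p : MvPolynomial σ K} (hp : Irreducible p) : ∃ v ≠ 0, eval v p = 0 := by
  by_contra! hne
  have honly : OnlyTrivialZero fun _ : Unit => p := fun v hv => by_contra fun hv0 =>
    hne v hv0 (hv ())
  have : (Ideal.span {p}).IsPrime := (Ideal.span_singleton_prime hp.ne_zero).mpr hp.prime
  have hX (i : σ) : Associated p (X i) := by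
    refine hp.associated_of_dvd X_prime.irreducible (Ideal.mem_span_singleton.mp ?_)
    exact honly.X_mem_of_isPrime (fun _ => Ideal.mem_span_singleton_self p) i
  obtain ⟨i, j, hij⟩ := exists_pair_ne σ
  exact hij (X_dvd_X.mp ((hX i).symm.trans (hX j)).dvd)

theorem squarefree_of_onlyTrivialZero_pderiv [Finite σ] [Nontrivial σ] {F : MvPolynomial σ K}
    (hF : OnlyTrivialZero fun i => pderiv i F) : Squarefree F := by
  have hF0 : F ≠ 0 := by
    rintro rfl
    exact one_ne_zero (hF 1 fun i => by simp only [map_zero])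
  rw [squarefree_iff_irreducible_sq_not_dvd_of_ne_zero hF0]
  rintro p hp ⟨q, rfl⟩
  obtain ⟨v, hv0, hv⟩ := exists_ne_zero_eval_eq_zero_of_irreducible hp
  exact hv0 (hF v fun i => by simp [Derivation.leibniz, hv])

theorem dvd_of_squarefree_of_eval_eq_zero [Finite σ] {F H : MvPolynomial σ K} (hF : Squarefree F)
    (h : ∀ v, eval v F = 0 → eval v H = 0) : F ∣ H := by
  have hH : H ∈ vanishingIdeal K (zeroLocus K (Ideal.span {F})) := by
    intro v hv
    have hvF := hv F (Ideal.mem_span_singleton_self F)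
    rw [aeval_eq_eval] at hvF ⊢
    exact h v hvF
  rw [vanishingIdeal_zeroLocus_eq_radical] at hH
  obtain ⟨k, hk⟩ := hH
  exact hF.isRadical k H (Ideal.mem_span_singleton.mp hk)

end Forms

theorem exists_eq_C_mul_of_dvd_of_isHomogeneous {R σ : Type*} [CommRing R] [IsDomain R]
    {F H : MvPolynomial σ R} {d : ℕ} (hF : F.IsHomogeneous d) (hH : H.IsHomogeneous d)
    (hH0 : H ≠ 0) (hdvd : F ∣ H) : ∃ c ≠ 0, H = C c * F := by
  obtain ⟨Q, rfl⟩ := hdvd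
  obtain ⟨hF0, hQ0⟩ := mul_ne_zero_iff.mp hH0
  have hdeg := totalDegree_mul_of_isDomain hF0 hQ0
  rw [hH.totalDegree hH0, hF.totalDegree hF0] at hdeg
  have hQ : Q = C (coeff 0 Q) := totalDegree_eq_zero_iff_eq_C.mp (by omega)
  refine ⟨coeff 0 Q, fun hc => hQ0 ?_, ?_⟩
  · rw [hQ, hc, C_0]
  · rw [← hQ, mul_comm]

section Valuation

variable {K L σ : Type*} [Field K] [IsAlgClosed K] [Field L] [Algebra K L] [Finite σ]
  (V : ValuationSubring L) [Algebra K V] [IsScalarTower K V L]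

theorem OnlyTrivialZero.valuation_pow_le {τ : Type*} {G : τ → MvPolynomial σ K} {e : ℕ}
    (hG : OnlyTrivialZero G) (hhom : ∀ j, (G j).IsHomogeneous e) (he : e ≠ 0) (w : σ → L)
    {γ : V.ValueGroup} (hγ : ∀ j, V.valuation (aeval w (G j)) ≤ γ) (i : σ) :
    V.valuation (w i) ^ e ≤ γ := by
  have : Nonempty σ := ⟨i⟩
  obtain ⟨m, hm⟩ := Finite.exists_max fun i => V.valuation (w i)
  refine (pow_le_pow_left' (hm i) e).trans ?_
  rcases eq_or_ne (w m) 0 with hwm | hwm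
  · rw [hwm, map_zero, zero_pow he]
    exact zero_le
  have hmem (k : σ) : (w m)⁻¹ * w k ∈ V := by
    rw [← V.valuation_le_one_iff, map_mul, map_inv₀]
    exact inv_mul_le_one_of_le₀ (hm k) zero_le
  let u : σ → V := fun k => ⟨(w m)⁻¹ * w k, hmem k⟩
  have hum : u m = 1 := Subtype.ext (inv_mul_cancel₀ hwm)
  obtain ⟨j, hj⟩ := hG.exists_isUnit_aeval (w := u) (i := m) (hum ▸ isUnit_one)
  have hw : w = w m • (algebraMap V L ∘ u) :=
    funext fun k => (mul_inv_cancel_left₀ hwm (w k)).symm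
  have huj : V.valuation (algebraMap V L (aeval u (G j))) = 1 := (V.valuation_eq_one_iff _).mp hj
  calc V.valuation (w m) ^ e
      = V.valuation (w m) ^ e * V.valuation (algebraMap V L (aeval u (G j))) := by
        rw [huj, mul_one]
    _ = V.valuation (aeval w (G j)) := by
        conv_rhs => rw [hw]
        rw [aeval_smul_of_isHomogeneous (hhom j), ← aeval_algebraMap_apply, map_mul, map_pow]
    _ ≤ γ := hγ j

end Valuation

section Transformation

variable {K L σ : Type*} [Field K] [IsAlgClosed K] [Field L] [Algebra K L] [Fintype σ]
  (V : ValuationSubring L) [Algebra K V] [IsScalarTower K V L]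
  {G : σ → MvPolynomial σ K} {e : ℕ} {M : Matrix σ σ K} {A B : Matrix σ σ L}

theorem valuation_entry_pow_le (hG : OnlyTrivialZero G) (hhom : ∀ k, (G k).IsHomogeneous e)
    (he : e ≠ 0) (hA : ∀ j k, aeval (fun i => A i j) (G k) = (M.map (algebraMap K L) * B) j k)
    {β : V.ValueGroup} (hB : ∀ i k, V.valuation (B i k) ≤ β) (i j : σ) :
    V.valuation (A i j) ^ e ≤ β := by
  refine hG.valuation_pow_le V hhom he (fun i => A i j) (fun k => ?_) i
  rw [hA, mul_apply]
  refine V.valuation.map_sum_le fun l _ => ?_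
  have hM : V.valuation (algebraMap K L (M j l)) ≤ 1 := by
    rw [IsScalarTower.algebraMap_apply K V L]
    exact V.valuation_le_one _
  rw [map_apply, map_mul]
  exact (mul_le_of_le_one_left' hM).trans (hB l k)

theorem entry_mem_valuationSubring (hG : OnlyTrivialZero G) (hhom : ∀ k, (G k).IsHomogeneous e)
    (he : 2 ≤ e) (hA : ∀ j k, aeval (fun i => A i j) (G k) = (M.map (algebraMap K L) * B) j k)
    (hB : ∀ j k, aeval (fun i => B i j) (G k) = (M.map (algebraMap K L) * A) j k) (i j : σ) :
    A i j ∈ V := by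
  have : Nonempty σ := ⟨i⟩
  obtain ⟨⟨a, b⟩, hab⟩ := Finite.exists_max fun x : σ × σ =>
    max (V.valuation (A x.1 x.2)) (V.valuation (B x.1 x.2))
  set α := max (V.valuation (A a b)) (V.valuation (B a b))
  have hAα (i j : σ) : V.valuation (A i j) ≤ α := (le_max_left _ _).trans (hab (i, j))
  have hBα (i j : σ) : V.valuation (B i j) ≤ α := (le_max_right _ _).trans (hab (i, j))
  have hα : α ^ e ≤ α := by
    rcases max_choice (V.valuation (A a b)) (V.valuation (B a b)) with h | h
    · exact (congrArg (· ^ e) h).trans_le (valuation_entry_pow_le V hG hhom (by omega) hA hBα a b)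
    · exact (congrArg (· ^ e) h).trans_le (valuation_entry_pow_le V hG hhom (by omega) hB hAα a b)
  have hα1 : α ≤ 1 := by
    by_contra! hlt
    exact (lt_self_pow₀ hlt he).not_ge hα
  exact (V.valuation_le_one_iff _).mp ((hAα i j).trans hα1)

end Transformation

section Stabilizer

variable {R K σ : Type*} [Fintype σ] [DecidableEq σ] [CommRing R] [Field K] [IsAlgClosed K]

/-- The group of invertible matrices `g` such that `F(g v) = F(v)` for all vectors `v`. -/
def formStabilizer (F : MvPolynomial σ R) : Subgroup (GL σ R) where
  carrier := {g | ∀ v, eval (g.val *ᵥ v) F = eval v F}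
  one_mem' v := by rw [Units.val_one, one_mulVec]
  mul_mem' {g h} hg hh v := by rw [Units.val_mul, ← mulVec_mulVec, hg, hh]
  inv_mem' {g} hg v := by
    rw [← hg, mulVec_mulVec, ← Units.val_mul, mul_inv_cancel, Units.val_one, one_mulVec]

theorem eval_pderiv_mulVec_of_mem_formStabilizer [IsDomain R] [Infinite R] {F : MvPolynomial σ R}
    {g : GL σ R} (hg : g ∈ formStabilizer F) (v : σ → R) :
    (fun i => eval (g.val *ᵥ v) (pderiv i F)) =
      (fun i => eval v (pderiv i F)) ᵥ* (g⁻¹ : GL σ R).val := by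
  have hF : linearSubst g.val F = F :=
    MvPolynomial.funext fun w => (eval_linearSubst _ _ _).trans (hg w)
  have hgrad : (fun i => eval (g.val *ᵥ v) (pderiv i F)) ᵥ* g.val =
      fun j => eval v (pderiv j F) := by
    ext j
    have hchain := congrArg (eval v) (pderiv_linearSubst g.val F j)
    rw [hF] at hchain
    simp only [hchain, map_sum, map_mul, eval_linearSubst, eval_C, vecMul, dotProduct]
  rw [← hgrad, vecMul_vecMul, ← Units.val_mul, mul_inv_cancel, Units.val_one, vecMul_one]

theorem aeval_pderiv_entry_of_mem_formStabilizer {T L : Type*} [CommRing L] [Algebra R L]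
    [IsDomain R] [Infinite R] {F : MvPolynomial σ R} {g : T → GL σ R}
    (hg : ∀ t, g t ∈ formStabilizer F) (φ : (T → R) →ₐ[R] L) (j k : σ) :
    aeval (fun i => φ fun t => g t i j) (pderiv k F) =
      ((of fun j i => eval (Pi.single j 1) (pderiv i F)).map (algebraMap R L) *
        of fun i k => φ fun t => (g t)⁻¹ i k) j k := by
  have hpointwise : aeval (fun i t => g t i j) (pderiv k F) =
      ∑ i, eval (Pi.single j 1) (pderiv i F) • fun t => (g t)⁻¹ i k := by
    ext t
    have h := congrFun (eval_pderiv_mulVec_of_mem_formStabilizer (hg t) (Pi.single j 1)) k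
    rw [mulVec_single_one] at h
    rw [aeval_pi_apply, Finset.sum_apply]
    exact h
  have h := congrArg φ hpointwise
  rw [comp_aeval_apply] at h
  simpa [mul_apply, Algebra.smul_def] using h

theorem finite_formStabilizer {F : MvPolynomial σ K} {d : ℕ} (hd : 3 ≤ d)
    (hF : F.IsHomogeneous d) (hsm : OnlyTrivialZero fun i => pderiv i F) :
    Finite (formStabilizer F) := by
  let entry (i j : σ) (g : formStabilizer F) : K := g.val i j
  have hint (i j : σ) : IsIntegral K (entry i j) := by
    refine isIntegral_of_forall_algHom_mem_valuationSubring fun L _ _ φ V _ _ => ?_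
    have hA := aeval_pderiv_entry_of_mem_formStabilizer (fun g : formStabilizer F => g.2) φ
    have hB := aeval_pderiv_entry_of_mem_formStabilizer (fun g : formStabilizer F => g⁻¹.2) φ
    simp only [Subgroup.coe_inv, inv_inv] at hB
    exact entry_mem_valuationSubring V hsm (fun k => hF.pderiv) (by omega) hA hB i j
  have (i j : σ) : Finite (Set.range (entry i j)) := finite_range_of_isIntegral (hint i j)
  refine Finite.of_injective
    (fun (g : formStabilizer F) (i j : σ) => (⟨entry i j g, g, rfl⟩ : Set.range (entry i j)))
    fun g h hgh => ?_
  ext i j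
  exact congrArg Subtype.val (congrFun (congrFun hgh i) j)

theorem exists_eval_mulVec_eq_mul {F : MvPolynomial σ K} {d : ℕ}
    (hF : F.IsHomogeneous d) (hsq : Squarefree F) {g : GL σ K}
    (hg : ∀ v, eval v F = 0 → eval (g.val *ᵥ v) F = 0) :
    ∃ c ≠ 0, ∀ v, eval (g.val *ᵥ v) F = c * eval v F := by
  have hsubst0 : linearSubst g.val F ≠ 0 := by
    intro h
    refine hsq.ne_zero (MvPolynomial.funext fun v => ?_)
    have hv := eval_linearSubst g.val F ((g⁻¹ : GL σ K).val *ᵥ v)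
    rw [h, mulVec_mulVec, ← Units.val_mul, mul_inv_cancel, Units.val_one, one_mulVec] at hv
    exact hv.symm
  have hdvd : F ∣ linearSubst g.val F := dvd_of_squarefree_of_eval_eq_zero hsq fun v hv =>
    (eval_linearSubst _ _ _).trans (hg v hv)
  obtain ⟨c, hc, hsubst⟩ := exists_eq_C_mul_of_dvd_of_isHomogeneous hF
    (isHomogeneous_linearSubst hF g.val) hsubst0 hdvd
  refine ⟨c, hc, fun v => ?_⟩
  rw [← eval_linearSubst, hsubst, map_mul, eval_C]

theorem exists_mul_scalar_mem_formStabilizer {F : MvPolynomial σ K} {d : ℕ} (hd : d ≠ 0)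
    (hF : F.IsHomogeneous d) {g : GL σ K} {c : K} (hc : c ≠ 0)
    (hg : ∀ v, eval (g.val *ᵥ v) F = c * eval v F) :
    ∃ z : Kˣ, g * GeneralLinearGroup.scalar σ z ∈ formStabilizer F := by
  obtain ⟨z, hz⟩ := IsAlgClosed.exists_pow_nat_eq c⁻¹ (Nat.pos_of_ne_zero hd)
  have hz0 : z ≠ 0 := by
    rintro rfl
    exact inv_ne_zero hc (by rw [← hz, zero_pow hd])
  refine ⟨Units.mk0 z hz0, fun v => ?_⟩
  have hscalar : (GeneralLinearGroup.scalar σ (Units.mk0 z hz0)).val *ᵥ v = z • v := by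
    ext i
    simp [mulVec_diagonal]
  have hsmul := aeval_smul_of_isHomogeneous hF z v
  simp only [aeval_eq_eval] at hsmul
  rw [Units.val_mul, ← mulVec_mulVec, hg, hscalar, hsmul, hz, mul_inv_cancel_left₀ hc]

theorem stabilizer_of_smooth_hypersurface_finite_general [Nontrivial σ] {F : MvPolynomial σ K}
    {d : ℕ} (hd : 3 ≤ d) (hF : F.IsHomogeneous d) (hsm : OnlyTrivialZero fun i => pderiv i F) :
    (QuotientGroup.mk' (Subgroup.center (GL σ K)) ''
      {g | ∀ v, eval v F = 0 → eval (g.val *ᵥ v) F = 0}).Finite := by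
  have := finite_formStabilizer hd hF hsm
  refine ((Set.toFinite (formStabilizer F : Set (GL σ K))).image
    (QuotientGroup.mk' (Subgroup.center (GL σ K)))).subset ?_
  rintro _ ⟨g, hg, rfl⟩
  obtain ⟨c, hc, hgc⟩ := exists_eval_mulVec_eq_mul hF (squarefree_of_onlyTrivialZero_pderiv hsm) hg
  obtain ⟨z, hz⟩ := exists_mul_scalar_mem_formStabilizer (by omega) hF hc hgc
  refine ⟨_, hz, (QuotientGroup.eq.mpr ?_).symm⟩
  rw [inv_mul_cancel_left, GeneralLinearGroup.center_eq_range_scalar]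
  exact ⟨z, rfl⟩

end Stabilizer

/-- Jordan's theorem: the subgroup of `PGL_{n+1}(ℂ)` stabilizing a smooth hypersurface of
degree `d ≥ 3` in `ℙⁿ` is finite.  We realize `PGL_{n+1}(ℂ)` as the quotient of
`GL_{n+1}(ℂ)` by its center, and the stabilizer as the image of the set of invertible
matrices preserving the zero locus of the defining form `F`. -/
theorem stabilizer_of_smooth_hypersurface_finite (n : ℕ) (hn : 2 ≤ n)
    (F : MvPolynomial (Fin (n + 1)) ℂ) (d : ℕ) (hd : 3 ≤ d) (hF : F.IsHomogeneous d)
    (hsm : ∀ v : Fin (n + 1) → ℂ, (∀ i, eval v (pderiv i F) = 0) → v = 0) :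
    Set.Finite
      ((QuotientGroup.mk' (Subgroup.center (GL (Fin (n + 1)) ℂ))) ''
        {g : GL (Fin (n + 1)) ℂ |
          ∀ v : Fin (n + 1) → ℂ, eval v F = 0 ↔ eval ((g : Matrix (Fin (n + 1)) (Fin (n + 1)) ℂ).mulVec v) F = 0}) := by
  have : Nontrivial (Fin (n + 1)) := Fin.nontrivial_iff_two_le.mpr (by omega)
  exact (stabilizer_of_smooth_hypersurface_finite_general hd hF hsm).subset
    (Set.image_mono fun g hg v => (hg v).mp)
end

section
/- Let F(X₀,…,X_n) be a homogeneous polynomial over C whose partial derivatives ∂F/∂X₀,…,∂F/∂X_n have only the origin as a common zero in C^{n+1}, and suppose deg F = d ≥ 3. If ρ₀,…,ρ_n are linear forms in X₀,…,X_n with Σ_j ρ_j · ∂F/∂X_j = 0, then every ρ_j vanishes identically. -/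
open MvPolynomial

/-!
Write `ρ = A X` for a matrix `A`, and let `D = ∑ ρⱼ ∂ⱼ` be the corresponding linear vector field,
so that `D F = 0`. Commuting `D` with `∂ⱼ` shows that the gradient transforms by
`D (∇F) = -Aᵀ (∇F)`.

* If `A v = z v`, then by Euler's identity `D` multiplies the value at `v` of a form of degree `e`
  by `e z`. For `e = d - 1` this makes `∇F(v) ≠ 0` an eigenvector of `-Aᵀ` with eigenvalue
  `(d - 1) z`. So the finite spectrum of `A` is stable under multiplication by `-(d - 1)`, hence is
  contained in `{0}`, and `A` is nilpotent.
* If `A ^ (k + 1) = 0` with `k ≥ 1`, then `D ^ (k + 1)` kills both `X` and `∇F`. By the Leibniz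
  rule `D ^ ((d - 1) k)` sends `∇F` to a positive multiple of `∇F (A ^ k X)`; as
  `(d - 1) k ≥ k + 1`, this vanishes, so `A ^ k = 0`. Descending in `k` gives `A = 0`.
-/

section Derivation

variable {R S : Type*} [CommSemiring R] [CommSemiring S] [Algebra R S]

theorem derivation_sum_apply {α : Type*} (s : Finset α) (D : α → Derivation R S S) (a : S) :
    (∑ i ∈ s, D i) a = ∑ i ∈ s, D i a := by
  have hfun := congrFun (map_sum (Derivation.coeFnAddMonoidHom (R := R) (A := S) (M := S)) D s) a
  rwa [Finset.sum_apply] at hfun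

open Finset in
theorem derivation_iterate_mul (D : Derivation R S S) (n : ℕ) (a b : S) :
    D^[n] (a * b) = ∑ ij ∈ antidiagonal n, n.choose ij.1 • (D^[ij.1] a * D^[ij.2] b) := by
  induction n with
  | zero => simp
  | succ n ih =>
    rw [sum_antidiagonal_choose_succ_nsmul (M := S) (fun i j => D^[i] a * D^[j] b) n]
    simp only [Function.iterate_succ_apply', ih, map_sum, map_nsmul, D.leibniz, smul_eq_mul,
      smul_add, sum_add_distrib]
    refine congrArg _ (sum_congr rfl fun ⟨i, j⟩ hij => ?_)
    rw [n.choose_symm_of_eq_add (mem_antidiagonal.1 hij).symm, mul_comm]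

theorem derivation_iterate_eq_zero_of_lt (D : Derivation R S S) {a : S} {m n : ℕ}
    (ha : D^[m + 1] a = 0) (hmn : m < n) : D^[n] a = 0 := by
  obtain ⟨r, rfl⟩ := Nat.exists_eq_add_of_lt hmn
  rw [show m + r + 1 = r + (m + 1) by ring, Function.iterate_add_apply, ha,
    Function.iterate_fixed (map_zero D)]

theorem derivation_iterate_mul_eq_zero (D : Derivation R S S) {a b : S} {m n : ℕ}
    (ha : D^[m + 1] a = 0) (hb : D^[n + 1] b = 0) : D^[m + n + 1] (a * b) = 0 := by
  rw [derivation_iterate_mul]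
  refine Finset.sum_eq_zero fun ⟨i, j⟩ hij => ?_
  have hsum : i + j = m + n + 1 := Finset.HasAntidiagonal.mem_antidiagonal.1 hij
  obtain hi | hj : m < i ∨ n < j := by lia
  · simp [derivation_iterate_eq_zero_of_lt D ha hi]
  · simp [derivation_iterate_eq_zero_of_lt D hb hj]

theorem derivation_iterate_add_mul (D : Derivation R S S) {a b : S} {m n : ℕ}
    (ha : D^[m + 1] a = 0) (hb : D^[n + 1] b = 0) :
    D^[m + n] (a * b) = (m + n).choose m • (D^[m] a * D^[n] b) := by
  rw [derivation_iterate_mul]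
  refine Finset.sum_eq_single_of_mem (m, n) (by simp) fun ⟨i, j⟩ hij hne => ?_
  have hsum : i + j = m + n := Finset.HasAntidiagonal.mem_antidiagonal.1 hij
  obtain hi | hj : m < i ∨ n < j := by grind
  · simp [derivation_iterate_eq_zero_of_lt D ha hi]
  · simp [derivation_iterate_eq_zero_of_lt D hb hj]

theorem derivation_iterate_multiset_prod_eq_zero (D : Derivation R S S) {k : ℕ} {s : Multiset S}
    (hs : ∀ a ∈ s, D^[k + 1] a = 0) : D^[s.card * k + 1] s.prod = 0 := by
  induction s using Multiset.induction_on with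
  | empty => simp
  | cons a s ih =>
    rw [Multiset.forall_mem_cons] at hs
    rw [Multiset.prod_cons, Multiset.card_cons, add_one_mul, add_comm (_ * k)]
    exact derivation_iterate_mul_eq_zero D hs.1 (ih hs.2)

/-- The multinomial coefficient `(e * k)! / (k !) ^ e`, the multiplicity with which `D ^ (e * k)`
distributes `k` derivatives to each of `e` factors. As a product of binomial coefficients it needs
no division. -/
def uniformMultinomial (e k : ℕ) : ℕ :=
  ∏ i ∈ Finset.range e, ((i + 1) * k).choose k

theorem uniformMultinomial_ne_zero (e k : ℕ) : uniformMultinomial e k ≠ 0 :=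
  Finset.prod_ne_zero_iff.2 fun i _ =>
    (Nat.choose_pos (Nat.le_mul_of_pos_left k i.succ_pos)).ne'

theorem derivation_iterate_multiset_prod (D : Derivation R S S) {k : ℕ} {s : Multiset S}
    (hs : ∀ a ∈ s, D^[k + 1] a = 0) :
    D^[s.card * k] s.prod = uniformMultinomial s.card k • (s.map D^[k]).prod := by
  induction s using Multiset.induction_on with
  | empty => simp [uniformMultinomial]
  | cons a s ih =>
    rw [Multiset.forall_mem_cons] at hs
    rw [Multiset.prod_cons, Multiset.card_cons, Multiset.map_cons, Multiset.prod_cons,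
      uniformMultinomial, Finset.prod_range_succ, ← uniformMultinomial, add_one_mul,
      add_comm (_ * k),
      derivation_iterate_add_mul D hs.1 (derivation_iterate_multiset_prod_eq_zero D hs.2),
      ih hs.2, mul_smul_comm, smul_smul, mul_comm (Nat.choose _ _)]

theorem aeval_monomial_eq_smul_multiset_prod {σ : Type*} (x : σ → S) (m : σ →₀ ℕ) (r : R) :
    aeval x (monomial m r) = r • (m.toMultiset.map x).prod := by
  rw [aeval_monomial, ← Algebra.smul_def, Finsupp.toMultiset_map, Finsupp.prod_toMultiset,
    Finsupp.prod_mapDomain_index (by simp) (by simp [pow_add])]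

theorem derivation_iterate_aeval_of_isHomogeneous {σ : Type*} (D : Derivation R S S) {k e : ℕ}
    {x : σ → S} (hx : ∀ i, D^[k + 1] (x i) = 0) {P : MvPolynomial σ R} (hP : P.IsHomogeneous e) :
    D^[e * k] (aeval x P) = uniformMultinomial e k • aeval (fun i => D^[k] (x i)) P := by
  have hpow (m : ℕ) : D^[m] = ((D : S →ₗ[R] S) ^ m : S →ₗ[R] S) := (Module.End.coe_pow _ _).symm
  rw [P.as_sum, map_sum, map_sum, hpow, map_sum, Finset.smul_sum]
  refine Finset.sum_congr rfl fun m hm => ?_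
  have hcard : (m.toMultiset.map x).card = e := by
    rw [Multiset.card_map, Finsupp.card_toMultiset]
    exact hP.degree_eq_sum_deg_support hm |>.symm
  have hprod := derivation_iterate_multiset_prod D (k := k) (s := m.toMultiset.map x) fun a ha => by
    obtain ⟨i, -, rfl⟩ := Multiset.mem_map.1 ha
    exact hx i
  rw [hcard, Multiset.map_map] at hprod
  rw [aeval_monomial_eq_smul_multiset_prod, aeval_monomial_eq_smul_multiset_prod, map_smul, ← hpow,
    hprod, smul_comm, Function.comp_def]

end Derivation

section LinearDerivation

open scoped Matrix

section Semiring

variable {ι R : Type*} [Fintype ι] [CommSemiring R]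

theorem toMvPolynomial_eq_sum_smul_X (A : Matrix ι ι R) (i : ι) :
    A.toMvPolynomial i = ∑ j, A i j • X j := by
  simp only [Matrix.toMvPolynomial, ← C_mul_X_eq_monomial, smul_eq_C_mul]

theorem pderiv_toMvPolynomial (A : Matrix ι ι R) (i j : ι) :
    pderiv j (A.toMvPolynomial i) = C (A i j) := by
  classical
  simp [toMvPolynomial_eq_sum_smul_X, pderiv_X, Pi.single_apply, smul_eq_C_mul]

theorem exists_toMvPolynomial_eq_of_isHomogeneous_one {ρ : ι → MvPolynomial ι R}
    (hρ : ∀ i, (ρ i).IsHomogeneous 1) : ∃ A : Matrix ι ι R, A.toMvPolynomial = ρ := by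
  have hspan (i : ι) : ∃ a : ι → R, ∑ j, a j • X j = ρ i := by
    rw [← Submodule.mem_span_range_iff_exists_fun, ← homogeneousSubmodule_one_eq_span_X]
    exact hρ i
  choose A hA using hspan
  exact ⟨A, funext fun i => (toMvPolynomial_eq_sum_smul_X A i).trans (hA i)⟩

/-- The linear vector field `x ↦ A x` on affine space, as a derivation of the polynomial ring. -/
noncomputable def linearDerivation (A : Matrix ι ι R) :
    Derivation R (MvPolynomial ι R) (MvPolynomial ι R) :=
  ∑ i, A.toMvPolynomial i • pderiv i

theorem linearDerivation_apply (A : Matrix ι ι R) (P : MvPolynomial ι R) :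
    linearDerivation A P = ∑ i, A.toMvPolynomial i * pderiv i P := by
  simp [linearDerivation, derivation_sum_apply]

theorem linearDerivation_X (A : Matrix ι ι R) (i : ι) :
    linearDerivation A (X i) = A.toMvPolynomial i := by
  classical
  simp [linearDerivation_apply, pderiv_X, Pi.single_apply]

theorem eval_linearDerivation_of_mulVec_eq_smul {A : Matrix ι ι R} {v : ι → R} {z : R}
    (hv : A *ᵥ v = z • v) {P : MvPolynomial ι R} {e : ℕ} (hP : P.IsHomogeneous e) :
    eval v (linearDerivation A P) = e * z * eval v P := by
  calc eval v (linearDerivation A P)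
      = z * eval v (∑ i, X i * pderiv i P) := by
        simp [linearDerivation_apply, Matrix.toMvPolynomial_eval_eq_apply, hv, Finset.mul_sum,
          mul_assoc]
    _ = e * z * eval v P := by
        rw [hP.sum_X_mul_pderiv, nsmul_eq_mul, map_mul, map_natCast]
        ring

theorem end_iterate_eq_sum_pow_smul {M : Type*} [DecidableEq ι] [AddCommMonoid M] [Module R M]
    (D : Module.End R M) {f : ι → M} {B : Matrix ι ι R} (h : ∀ j, D (f j) = ∑ i, B j i • f i)
    (m : ℕ) (j : ι) : D^[m] (f j) = ∑ i, (B ^ m) j i • f i := by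
  induction m generalizing j with
  | zero => simp [Matrix.one_apply]
  | succ m ih =>
    simp only [Function.iterate_succ_apply', ih, map_sum, map_smul, h, pow_succ, Matrix.mul_apply,
      Finset.sum_smul, Finset.smul_sum, smul_smul]
    exact Finset.sum_comm

theorem linearDerivation_iterate_X [DecidableEq ι] (A : Matrix ι ι R) (m : ℕ) (i : ι) :
    (linearDerivation A)^[m] (X i) = (A ^ m).toMvPolynomial i := by
  rw [toMvPolynomial_eq_sum_smul_X]
  exact end_iterate_eq_sum_pow_smul (linearDerivation A : Module.End R (MvPolynomial ι R))
    (fun j => (linearDerivation_X A j).trans (toMvPolynomial_eq_sum_smul_X A j)) m i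

theorem eval_linearDerivation_iterate_of_pow_eq_zero [DecidableEq ι] {A : Matrix ι ι R} {k : ℕ}
    (hA : A ^ (k + 1) = 0) {P : MvPolynomial ι R} {e : ℕ} (hP : P.IsHomogeneous e) (u : ι → R) :
    eval u ((linearDerivation A)^[e * k] P) = uniformMultinomial e k * eval (A ^ k *ᵥ u) P := by
  have hX (i : ι) : (linearDerivation A)^[k + 1] (X i) = 0 := by
    rw [linearDerivation_iterate_X, hA, Matrix.toMvPolynomial_zero, Pi.zero_apply]
  have hiter := derivation_iterate_aeval_of_isHomogeneous _ hX hP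
  rw [aeval_X_left_apply] at hiter
  simp only [linearDerivation_iterate_X] at hiter
  have hcomp : (aeval u).comp (bind₁ (A ^ k).toMvPolynomial) = aeval (A ^ k *ᵥ u) :=
    algHom_ext fun i => by simp [aeval_eq_eval, Matrix.toMvPolynomial_eval_eq_apply]
  rw [hiter, nsmul_eq_mul, map_mul, map_natCast]
  exact congrArg _ (DFunLike.congr_fun hcomp P)

end Semiring

section Ring

variable {ι R : Type*} [Fintype ι] [CommRing R]

theorem lie_pderiv_linearDerivation (A : Matrix ι ι R) (j : ι) :
    ⁅(pderiv j : Derivation R _ (MvPolynomial ι R)), linearDerivation A⁆ =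
      ∑ i, A i j • (pderiv i : Derivation R _ (MvPolynomial ι R)) := by
  classical
  refine derivation_ext fun l => ?_
  simp [Derivation.commutator_apply, linearDerivation_X, pderiv_toMvPolynomial,
    derivation_sum_apply, pderiv_X, Pi.single_apply, smul_eq_C_mul, apply_ite]

theorem linearDerivation_pderiv {A : Matrix ι ι R} {F : MvPolynomial ι R}
    (hF : linearDerivation A F = 0) (j : ι) :
    linearDerivation A (pderiv j F) = ∑ i, (-Aᵀ) j i • pderiv i F := by
  have hlie := congrArg (· F) (lie_pderiv_linearDerivation A j)
  simp only [Derivation.commutator_apply, hF, map_zero, zero_sub, derivation_sum_apply,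
    Derivation.smul_apply] at hlie
  simp [← hlie]

end Ring

end LinearDerivation

section Eigenvalues

open scoped Matrix

variable {ι : Type*} [Fintype ι] [DecidableEq ι]

theorem mem_spectrum_iff_exists_mulVec_eq_smul {K : Type*} [Field K]
    {A : Matrix ι ι K} {z : K} : z ∈ spectrum K A ↔ ∃ v ≠ 0, A *ᵥ v = z • v := by
  rw [← Matrix.spectrum_toLin', ← Module.End.hasEigenvalue_iff_mem_spectrum]
  refine ⟨fun h => ?_, fun ⟨v, hv0, hv⟩ => ?_⟩
  · obtain ⟨v, hv⟩ := h.exists_hasEigenvector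
    exact ⟨v, hv.2, hv.apply_eq_smul⟩
  · exact Module.End.hasEigenvalue_of_hasEigenvector
      (Module.End.hasEigenvector_iff.2 ⟨Module.End.mem_eigenspace_iff.2 hv, hv0⟩)

theorem spectrum_transpose {R : Type*} [CommRing R] (A : Matrix ι ι R) :
    spectrum R Aᵀ = spectrum R A := by
  ext z
  rw [spectrum.mem_iff, spectrum.mem_iff, ← Matrix.isUnit_transpose, Matrix.transpose_sub,
    Matrix.transpose_transpose, Matrix.algebraMap_eq_diagonal, Matrix.diagonal_transpose]

theorem isNilpotent_of_spectrum_subset_zero {K : Type*} [Field K] {A : Matrix ι ι K}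
    (hsplits : A.charpoly.Splits) (hA : spectrum K A ⊆ {0}) : IsNilpotent A := by
  have hroots : A.charpoly.roots = Multiset.replicate A.charpoly.roots.card 0 :=
    Multiset.eq_replicate_card.2 fun z hz => hA <|
      Matrix.mem_spectrum_iff_isRoot_charpoly.2 (Polynomial.isRoot_of_mem_roots hz)
  have hcharpoly : A.charpoly = Polynomial.X ^ A.charpoly.roots.card := by
    conv_lhs => rw [hsplits.eq_prod_roots_of_monic A.charpoly_monic, hroots]
    simp
  refine ⟨A.charpoly.roots.card, ?_⟩
  rw [← Polynomial.aeval_X_pow (R := K), ← hcharpoly, Matrix.aeval_self_charpoly]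

theorem subset_zero_of_finite_of_intCast_mul_mem {R : Type*} [Ring R] [NoZeroDivisors R]
    [CharZero R] {s : Set R} (hs : s.Finite) {c : ℤ} (hc : 1 < c.natAbs)
    (hmul : ∀ z ∈ s, c * z ∈ s) : s ⊆ {0} := by
  intro z hz
  by_contra hz0
  have hinj : Function.Injective fun m : ℕ => (c : R) ^ m * z := by
    intro m m' h
    have := mul_right_cancel₀ hz0 h
    exact Int.pow_right_injective hc (by exact_mod_cast this)
  refine Set.infinite_of_injective_forall_mem hinj (fun m => ?_) hs
  induction m with
  | zero => simpa using hz
  | succ m ih => simpa only [pow_succ', mul_assoc] using hmul _ ih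

end Eigenvalues

section CommonZero

open scoped Matrix

variable {ι : Type*} [Fintype ι] [DecidableEq ι]

theorem eval_linearDerivation_iterate_eq_mulVec {R : Type*} [CommRing R] {A B : Matrix ι ι R}
    {f : ι → MvPolynomial ι R} (hD : ∀ j, linearDerivation A (f j) = ∑ i, B j i • f i) (m : ℕ)
    (v : ι → R) (j : ι) :
    eval v ((linearDerivation A)^[m] (f j)) = (B ^ m *ᵥ fun i => eval v (f i)) j := by
  have hiter := end_iterate_eq_sum_pow_smul
    (linearDerivation A : Module.End R (MvPolynomial ι R)) hD m j
  rw [Derivation.coeFn_coe] at hiter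
  simp [hiter, Matrix.mulVec, dotProduct, smul_eval]

theorem natCast_mul_mem_spectrum_of_linearDerivation_eq_sum {K : Type*} [Field K]
    {A B : Matrix ι ι K} {f : ι → MvPolynomial ι K} {e : ℕ} (hf : ∀ j, (f j).IsHomogeneous e)
    (hzero : ∀ v, (∀ i, eval v (f i) = 0) → v = 0)
    (hD : ∀ j, linearDerivation A (f j) = ∑ i, B j i • f i) {z : K} (hz : z ∈ spectrum K A) :
    e * z ∈ spectrum K B := by
  obtain ⟨v, hv0, hv⟩ := mem_spectrum_iff_exists_mulVec_eq_smul.1 hz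
  refine mem_spectrum_iff_exists_mulVec_eq_smul.2
    ⟨fun i => eval v (f i), fun h => hv0 (hzero v fun i => congrFun h i), funext fun j => ?_⟩
  rw [Pi.smul_apply, smul_eq_mul, ← eval_linearDerivation_of_mulVec_eq_smul hv (hf j)]
  simpa using (eval_linearDerivation_iterate_eq_mulVec hD 1 v j).symm

theorem pow_eq_zero_of_linearDerivation_eq_sum {R : Type*} [CommRing R] [NoZeroDivisors R]
    [CharZero R] {A B : Matrix ι ι R} {f : ι → MvPolynomial ι R} {e k : ℕ}
    (hf : ∀ j, (f j).IsHomogeneous e)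
    (hzero : ∀ v, (∀ i, eval v (f i) = 0) → v = 0)
    (hD : ∀ j, linearDerivation A (f j) = ∑ i, B j i • f i) (hA : A ^ (k + 1) = 0)
    (hB : B ^ (e * k) = 0) : A ^ k = 0 := by
  refine Matrix.ext_of_mulVec_single fun i => ?_
  rw [Matrix.zero_mulVec]
  refine hzero _ fun j => ?_
  have heval := eval_linearDerivation_iterate_of_pow_eq_zero hA (hf j) (Pi.single i 1)
  rw [eval_linearDerivation_iterate_eq_mulVec hD, hB, Matrix.zero_mulVec, Pi.zero_apply] at heval
  exact (mul_eq_zero.1 heval.symm).resolve_left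
    (Nat.cast_ne_zero.2 (uniformMultinomial_ne_zero e k))

theorem isNilpotent_of_linearDerivation_eq_neg_transpose {K : Type*} [Field K] [IsAlgClosed K]
    [CharZero K] {A : Matrix ι ι K} {f : ι → MvPolynomial ι K} {e : ℕ} (he : 2 ≤ e)
    (hf : ∀ j, (f j).IsHomogeneous e) (hzero : ∀ v, (∀ i, eval v (f i) = 0) → v = 0)
    (hD : ∀ j, linearDerivation A (f j) = ∑ i, (-Aᵀ) j i • f i) : IsNilpotent A := by
  refine isNilpotent_of_spectrum_subset_zero (IsAlgClosed.splits _) <|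
    subset_zero_of_finite_of_intCast_mul_mem (c := -e) A.finite_spectrum (by lia) fun z hz => ?_
  have hmem := natCast_mul_mem_spectrum_of_linearDerivation_eq_sum hf hzero hD hz
  rw [← spectrum.neg_eq, Set.mem_neg, spectrum_transpose] at hmem
  simpa using hmem

theorem eq_zero_of_isNilpotent_of_linearDerivation_eq_neg_transpose {R : Type*} [CommRing R]
    [NoZeroDivisors R] [CharZero R] {A : Matrix ι ι R} {f : ι → MvPolynomial ι R} {e : ℕ}
    (he : 2 ≤ e) (hf : ∀ j, (f j).IsHomogeneous e)
    (hzero : ∀ v, (∀ i, eval v (f i) = 0) → v = 0)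
    (hD : ∀ j, linearDerivation A (f j) = ∑ i, (-Aᵀ) j i • f i) (hA : IsNilpotent A) : A = 0 := by
  obtain ⟨n, hn⟩ := hA
  have hsucc : A ^ (n + 1) = 0 := pow_eq_zero_of_le n.le_succ hn
  clear hn
  induction n with
  | zero => simpa using hsucc
  | succ k ih =>
    refine ih (pow_eq_zero_of_linearDerivation_eq_sum hf hzero hD hsucc ?_)
    have hle : k + 1 + 1 ≤ e * (k + 1) := by nlinarith
    rw [neg_pow, ← Matrix.transpose_pow, pow_eq_zero_of_le hle hsucc, Matrix.transpose_zero,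
      mul_zero]

end CommonZero

theorem linear_relation_among_partials_vanishes_general {K : Type*} [Field K] [IsAlgClosed K]
    [CharZero K] {ι : Type*} [Fintype ι] {F : MvPolynomial ι K} {d : ℕ} (hd : 3 ≤ d)
    (hF : F.IsHomogeneous d) (hsm : ∀ v : ι → K, (∀ i, eval v (pderiv i F) = 0) → v = 0)
    {ρ : ι → MvPolynomial ι K} (hρ : ∀ j, (ρ j).IsHomogeneous 1)
    (hrel : ∑ j, ρ j * pderiv j F = 0) (j : ι) : ρ j = 0 := by
  classical
  obtain ⟨A, rfl⟩ := exists_toMvPolynomial_eq_of_isHomogeneous_one hρ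
  have he : 2 ≤ d - 1 := by lia
  have hgrad (i : ι) : (pderiv i F).IsHomogeneous (d - 1) := hF.pderiv
  have hD := linearDerivation_pderiv ((linearDerivation_apply A F).trans hrel)
  have hnil := isNilpotent_of_linearDerivation_eq_neg_transpose he hgrad hsm hD
  rw [eq_zero_of_isNilpotent_of_linearDerivation_eq_neg_transpose he hgrad hsm hD hnil,
    Matrix.toMvPolynomial_zero, Pi.zero_apply]

/-- If `F` is a form of degree `d ≥ 3` over `ℂ` whose partial derivatives have only the
origin as common zero, then any relation `Σ ρⱼ · ∂F/∂Xⱼ = 0` with the `ρⱼ` linear forms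
forces all `ρⱼ` to vanish. -/
theorem linear_relation_among_partials_vanishes (n : ℕ)
    (F : MvPolynomial (Fin (n + 1)) ℂ) (d : ℕ) (hd : 3 ≤ d) (hF : F.IsHomogeneous d)
    (hsm : ∀ v : Fin (n + 1) → ℂ, (∀ i, eval v (pderiv i F) = 0) → v = 0)
    (ρ : Fin (n + 1) → MvPolynomial (Fin (n + 1)) ℂ)
    (hρ : ∀ j, (ρ j).IsHomogeneous 1)
    (hrel : ∑ j, ρ j * pderiv j F = 0) :
    ∀ j, ρ j = 0 :=
  linear_relation_among_partials_vanishes_general hd hF hsm hρ hrel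
end
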